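/- arXiv:2305.19944 — 4 statements merged into one kernel-verified Lean document; each statement's English description precedes it below -/
import Mathlib

section
/- Let g ∈ ℤ[a,b] be irreducible and monic as a polynomial in b over ℤ[a]. Let k, l, m, n be integers with 0 ≤ l ≤ k, m ≥ 1, n ≥ 1, and let r = gcd(m,n). If g divides f_{k,n} and g divides f_{l,m} in ℤ[a,b], then g divides f_{l,r} in ℤ[a,b]. -/
/-!
Reduce modulo `g`: in the quotient ring `ℤ[a,b]/(g)` the sequence `P` becomes the orbit of `a` under
the cubic map `z ↦ z³ - 3a²z + 2a³ + b`, and `g ∣ fkn i j` says that the `i`-th orbit point has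
period `j`. The `l`-th point is periodic of period `m`, and as `l ≤ k` it lies in the cycle of the
`k`-th point: iterating the map `k * m` times fixes the `l`-th point and passes through the `k`-th
one. Forward images of a point of period `n` have period `n`, so the `l`-th point has both periods
`m` and `n`, hence period `gcd m n` (`Function.IsPeriodicPt.gcd`).
-/


open Polynomial

/-- We regard `ℤ[a,b]` as `(ℤ[a])[b]`; the variable `a` is `C X` and `b` is `X`.
`P m = f^m(a)` for `f(z) = z³ - 3a²z + 2a³ + b`. -/
noncomputable def P : ℕ → Polynomial (Polynomial ℤ)
  | 0 => C X
  | m + 1 => (P m) ^ 3 - 3 * (C X) ^ 2 * (P m) + 2 * (C X) ^ 3 + X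

/-- `f_{k,n} = f^{k+n}(a) - f^k(a)`. -/
noncomputable def fkn (k n : ℕ) : Polynomial (Polynomial ℤ) := P (k + n) - P k

/-- The cubic map `z ↦ z³ - 3a²z + 2a³ + b` on the quotient `ℤ[a,b]/(g)`. -/
noncomputable def cubicMod (g : Polynomial (Polynomial ℤ))
    (z : Polynomial (Polynomial ℤ) ⧸ Ideal.span {g}) :
    Polynomial (Polynomial ℤ) ⧸ Ideal.span {g} :=
  z ^ 3 - 3 * (Ideal.Quotient.mk (Ideal.span {g}) (C X)) ^ 2 * z + 2 * (Ideal.Quotient.mk (Ideal.span {g}) (C X)) ^ 3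
    + Ideal.Quotient.mk (Ideal.span {g}) X

theorem mk_P_add (g : Polynomial (Polynomial ℤ)) (i j : ℕ) :
    Ideal.Quotient.mk (Ideal.span {g}) (P (i + j)) =
      (cubicMod g)^[j] (Ideal.Quotient.mk (Ideal.span {g}) (P i)) := by
  induction j with
  | zero => rfl
  | succ j ih =>
    rw [Function.iterate_succ_apply', ← ih, ← Nat.add_assoc, P]
    simp only [cubicMod, map_add, map_sub, map_mul, map_pow, map_ofNat]

theorem dvd_fkn_iff (g : Polynomial (Polynomial ℤ)) (i j : ℕ) :
    g ∣ fkn i j ↔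
      Function.IsPeriodicPt (cubicMod g) j (Ideal.Quotient.mk (Ideal.span {g}) (P i)) := by
  rw [Function.IsPeriodicPt, Function.IsFixedPt, ← mk_P_add, Ideal.Quotient.eq,
    Ideal.mem_span_singleton, fkn]

theorem stmt1 (g : Polynomial (Polynomial ℤ)) (hirr : Irreducible g) (hmon : g.Monic)
    (k l m n : ℕ) (hlk : l ≤ k) (hm : 1 ≤ m) (hn : 1 ≤ n)
    (h1 : g ∣ fkn k n) (h2 : g ∣ fkn l m) :
    g ∣ fkn l (Nat.gcd m n) := by
  rw [dvd_fkn_iff] at h1 h2 ⊢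
  refine h2.gcd ?_
  have hkm : k ≤ k * m := Nat.le_mul_of_pos_right k hm
  -- The `l`-th orbit point is the image of the `k`-th one under `k * m - (k - l)` iterations.
  have hback : (cubicMod g)^[k * m - (k - l)] (Ideal.Quotient.mk (Ideal.span {g}) (P k)) =
      Ideal.Quotient.mk (Ideal.span {g}) (P l) := by
    rw [← mk_P_add, show k + (k * m - (k - l)) = l + k * m by omega, mk_P_add]
    exact h2.const_mul k
  rw [← hback]
  exact h1.apply_iterate _
end

section
/- The polynomial (b−a)(b+2a)+1 is irreducible in ℂ[a,b]. -/
/-!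
The linear forms `b - a` and `b + 2a` are linearly independent, so `x ↦ b - a`, `y ↦ b + 2a`
is a linear change of coordinates, an automorphism of `ℂ[x, y]` that carries `x y + 1` to the
given polynomial. Finally `x y + 1` is irreducible, being linear in `y` with coprime
coefficients `x` and `1`.
-/

open MvPolynomial

/-- The variable `a` in `ℂ[a,b]`. -/
noncomputable def aP : MvPolynomial (Fin 2) ℂ := X 0

/-- The variable `b` in `ℂ[a,b]`. -/
noncomputable def bP : MvPolynomial (Fin 2) ℂ := X 1

/-- The polynomial `h_{0,2} = (b-a)(b+2a)+1` is irreducible in `ℂ[a,b]`. -/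
theorem stmt10 : Irreducible ((bP - aP) * (bP + 2 * aP) + 1) := by
  have h3 : (C (1/3) : MvPolynomial (Fin 2) ℂ) * 3 = 1 := by
    rw [show (3 : MvPolynomial (Fin 2) ℂ) = C 3 from (map_ofNat C 3).symm, ← C_mul]
    norm_num
  -- The inverse solves `x = b - a`, `y = b + 2a`: `a = (y - x) / 3`, `b = (2x + y) / 3`.
  let e : MvPolynomial (Fin 2) ℂ ≃ₐ[ℂ] MvPolynomial (Fin 2) ℂ :=
    AlgEquiv.ofAlgHom (aeval ![X 1 - X 0, X 1 + (X 0 + X 0)])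
      (aeval ![C (1/3) * (X 1 - X 0), C (1/3) * (X 0 + X 0 + X 1)])
      (by
        ext1 i
        fin_cases i
        · simp [-one_div, algebraMap_eq]
          linear_combination (X 0) * h3
        · simp [-one_div, algebraMap_eq]
          linear_combination (X 1) * h3)
      (by
        ext1 i
        fin_cases i
        · simp [-one_div]
          linear_combination (X 0) * h3
        · simp [-one_div]
          linear_combination (X 1) * h3)
  have h : Irreducible (X 0 * X 1 + 1 : MvPolynomial (Fin 2) ℂ) := by
    refine irreducible_mul_X_add (X 0) 1 1 (X_ne_zero 0) ?_ ?_ isRelPrime_one_right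
    · simp [vars_X]
    · simp
  have he : e (X 0 * X 1 + 1) = (bP - aP) * (bP + 2 * aP) + 1 := by
    simp [e, aP, bP, two_mul]
  rw [← he]
  exact (MulEquiv.irreducible_iff e).mpr h
end

section
/- Let k ≥ 2 be an integer and let p ∈ ℤ[a,b] be monic as a polynomial in b over ℤ[a], irreducible in ℚ[a,b], dividing f_{k,2} but not dividing f_{k,1}·f_{k−1,2} (so p is the polynomial h_{k,2}). Consider the polynomial p(a, a−i) ∈ ℤ[i][a] obtained by substituting b = a − i, where i² = −1. Then there is a unit u ∈ {1, i, −1, −i} of ℤ[i] such that p(a, a−i) = u·3·(2ai+1) if k is even, and p(a, a−i) = u·3a if k is odd. -/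
open Polynomial

/-- The substitution `b = a - i`, sending `p(a,b) ∈ ℤ[a,b]` to `p(a, a-i) ∈ ℤ[i][a]`. -/
noncomputable def subst (p : Polynomial (Polynomial ℤ)) : Polynomial GaussianInt :=
  Polynomial.eval₂ (Polynomial.mapRingHom (Int.castRingHom GaussianInt))
    (X - C Zsqrtd.sqrtd) p

/-!
Write `t = b - a` and let `P_m` be the critical orbit. Since
`f(z) - f(w) = (z - w)(z² + zw + w² - 3a²)`, one gets `f_{k,1} = f_{k-1,1} · R` and
`f_{k,2} = f_{k-1,2} · R · S`, where
`S = 1 + (P_{k+1} + P_k + P_{k-1})(P_k - P_{k-1})`; hence `p` divides `S`. For odd `k` the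
polynomial `h = t(b + 2a) + 1`, which divides `f_{0,2}` and so `f_{k-1,2}`, also divides `S`, and
`p` divides `S / h`. Let `T` be `S` for even `k` and `S / h` for odd `k`.

* At `b = a - i` the critical orbit is `a, a - i, -2a, a - i, -2a, …`, so that `T(a, a - i)` is
  `3(2ai + 1)` for even `k` and `-3ai` for odd `k` (`subst_S_even`, `subst_S_odd`).
* Modulo `3` the map `f` is additive up to a constant, `P_{m+1} - P_m ≡ t^{3^m}`, and `S` is a power
  of the irreducible polynomial `t² + 1`, which vanishes at `b = a - i`. Hence every nonconstant
  monic divisor of `S` takes a value divisible by `3` at `b = a - i` (`three_dvd_subst`).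

A factorization `T = p q` with `q ≠ 1` would therefore make `T(a, a - i)` divisible by `9`, which it
is not; so `p = T` (`eq_of_dvd`).
-/

/-! ### The factors of the `f_{k,2}` -/

/-- The quadratic factor of `f_{m+1,1} = f_{m,1} · R m`. -/
noncomputable def R (m : ℕ) : Polynomial (Polynomial ℤ) :=
  P (m + 1) ^ 2 + P (m + 1) * P m + P m ^ 2 - 3 * (C X) ^ 2

/-- The cofactor in `f_{m+1,2} = f_{m,2} · R m · S m`; thus `S m` is the polynomial `S` for
`k = m + 1`. -/
noncomputable def S (m : ℕ) : Polynomial (Polynomial ℤ) :=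
  1 + (P (m + 2) + P (m + 1) + P m) * (P (m + 1) - P m)

/-- The polynomial `h_{0,2}`, whose zeros are the parameters for which `a` has exact period two. -/
noncomputable def h : Polynomial (Polynomial ℤ) := (X - C X) * (X + 2 * C X) + 1

lemma P_succ (m : ℕ) :
    P (m + 1) = (P m) ^ 3 - 3 * (C X) ^ 2 * (P m) + 2 * (C X) ^ 3 + X := rfl

lemma P_one : P 1 = X := by
  rw [P_succ, P]; ring

lemma fkn_succ_one (m : ℕ) : fkn (m + 1) 1 = fkn m 1 * R m := by
  have e1 := P_succ m
  have e2 := P_succ (m + 1)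
  simp only [fkn, R]
  linear_combination e2 - e1

lemma fkn_succ_two (m : ℕ) : fkn (m + 1) 2 = fkn m 2 * (R m * S m) := by
  have e1 := P_succ m
  have e3 := P_succ (m + 2)
  have e : P (m + 2) - P (m + 1) = (P (m + 1) - P m) * R m := fkn_succ_one m
  -- Replacing `R m * (P (m + 1) - P m)` by `P (m + 2) - P (m + 1)` turns `R m * S m` into the
  -- quadratic cofactor of `P (m + 2) - P m`.
  have hRS : R m * S m = P (m + 2) ^ 2 + P (m + 2) * P m + P m ^ 2 - 3 * (C X) ^ 2 := by
    have hR : R m = P (m + 1) ^ 2 + P (m + 1) * P m + P m ^ 2 - 3 * (C X) ^ 2 := rfl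
    rw [S]
    linear_combination hR - (P (m + 2) + P (m + 1) + P m) * e
  rw [hRS]
  simp only [fkn, show m + 1 + 2 = m + 2 + 1 from rfl]
  linear_combination e3 - e1

lemma fkn_zero_two : fkn 0 2 = (X - C X) * h := by
  simp only [fkn, h, zero_add]
  rw [P_succ 1, P_one, P]; ring

lemma h_dvd_fkn (m : ℕ) : h ∣ fkn m 2 := by
  induction m with
  | zero => exact fkn_zero_two ▸ dvd_mul_left _ _
  | succ m ih => exact fkn_succ_two m ▸ ih.mul_right _

lemma h_dvd_P (j : ℕ) : h ∣ P (2 * j) - C X ∧ h ∣ P (2 * j + 1) - X := by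
  induction j with
  | zero => rw [mul_zero, zero_add, P_one, P]; simp
  | succ j ih =>
    have h1 := h_dvd_fkn (2 * j)
    have h2 := h_dvd_fkn (2 * j + 1)
    simp only [fkn] at h1 h2
    constructor
    · convert dvd_add h1 ih.1 using 1
      rw [show 2 * (j + 1) = 2 * j + 2 by ring]; ring
    · convert dvd_add h2 ih.2 using 1
      rw [show 2 * (j + 1) + 1 = 2 * j + 1 + 2 by ring]; ring

lemma h_dvd_S (j : ℕ) : h ∣ S (2 * j) := by
  obtain ⟨⟨u, hu⟩, v, hv⟩ := h_dvd_P j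
  obtain ⟨⟨w, hw⟩, -⟩ := h_dvd_P (j + 1)
  rw [show 2 * (j + 1) = 2 * j + 2 by ring] at hw
  rw [sub_eq_iff_eq_add] at hu hv hw
  refine ⟨1 + (w + v + u) * (P (2 * j + 1) - P (2 * j)) + (X + 2 * C X) * (v - u), ?_⟩
  simp only [S, hu, hv, hw]
  generalize hh : h = H
  have : H = (X - C X) * (X + 2 * C X) + 1 := hh.symm
  linear_combination -this

lemma P_monic (m : ℕ) : (P (m + 1)).Monic ∧ (P (m + 1)).natDegree = 3 ^ m := by
  induction m with
  | zero => rw [zero_add, P_one]; exact ⟨monic_X, by simp⟩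
  | succ m ih =>
    obtain ⟨hM, hd⟩ := ih
    have h1 : 1 ≤ 3 ^ m := Nat.one_le_pow _ _ (by norm_num)
    have e : P (m + 1 + 1) = P (m + 1) ^ 3 +
        (C (-3 * X ^ 2) * P (m + 1) + C (2 * X ^ 3) + X) := by
      rw [P_succ]
      simp only [map_mul, map_neg, map_pow, map_ofNat]
      ring
    have hlt : (C (-3 * X ^ 2 : Polynomial ℤ) * P (m + 1) + C (2 * X ^ 3) + X).natDegree
        < (P (m + 1) ^ 3).natDegree := by
      rw [hM.natDegree_pow, hd]
      refine lt_of_le_of_lt (b := 3 ^ m) ?_ (by omega)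
      refine natDegree_add_le_of_degree_le (natDegree_add_le_of_degree_le ?_ ?_) ?_
      · exact (natDegree_C_mul_le _ _).trans hd.le
      · exact (natDegree_C _).le.trans (Nat.zero_le _)
      · simpa using h1
    have hlt' := degree_lt_degree hlt
    rw [e]
    refine ⟨(hM.pow 3).add_of_left hlt', ?_⟩
    rw [natDegree_add_eq_left_of_natDegree_lt hlt, hM.natDegree_pow, hd]; ring

lemma fkn_monic (m n : ℕ) (hmn : 2 ≤ m + n) (hn : 1 ≤ n) : (fkn m n).Monic := by
  obtain ⟨r, hr⟩ : ∃ r, m + n = r + 1 := ⟨m + n - 1, by omega⟩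
  rw [fkn, hr]
  refine (P_monic r).1.sub_of_left (degree_lt_degree ?_)
  rw [(P_monic r).2]
  cases m with
  | zero => simp [P]
  | succ m =>
    rw [(P_monic m).2]
    exact Nat.pow_lt_pow_right (by norm_num) (by omega)

lemma h_monic : h.Monic :=
  (monic_X_sub_C (X : Polynomial ℤ)).of_mul_monic_left
    (fkn_zero_two ▸ fkn_monic 0 2 (by norm_num) (by norm_num))

lemma S_monic (m : ℕ) (hm : 1 ≤ m) : (S m).Monic := by
  have h1 : (R m).Monic := (fkn_monic m 1 (by omega) (by omega)).of_mul_monic_left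
    (fkn_succ_one m ▸ fkn_monic (m + 1) 1 (by omega) (by omega))
  have h2 : (R m * S m).Monic := (fkn_monic m 2 (by omega) (by omega)).of_mul_monic_left
    (fkn_succ_two m ▸ fkn_monic (m + 1) 2 (by omega) (by omega))
  exact h1.of_mul_monic_left h2

/-! ### The specialization `b = a - i` -/

/-- `subst` as a ring homomorphism. -/
noncomputable def substHom : Polynomial (Polynomial ℤ) →+* Polynomial GaussianInt :=
  Polynomial.eval₂RingHom (Polynomial.mapRingHom (Int.castRingHom GaussianInt))
    (X - C Zsqrtd.sqrtd)

lemma substHom_apply (p : Polynomial (Polynomial ℤ)) : substHom p = subst p := rfl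

lemma substHom_X : substHom X = X - C Zsqrtd.sqrtd := by simp [substHom]

lemma substHom_CX : substHom (C X) = X := by simp [substHom]

lemma I_sq : (C Zsqrtd.sqrtd : Polynomial GaussianInt) ^ 2 = -1 := by
  have : (Zsqrtd.sqrtd : GaussianInt) ^ 2 = -1 := by
    rw [sq]; ext <;> simp
  rw [← C_pow, this]; simp

lemma substHom_h : substHom h = -3 * C Zsqrtd.sqrtd * X := by
  simp only [h, map_add, map_sub, map_mul, map_one, map_ofNat, substHom_X, substHom_CX]
  linear_combination I_sq

lemma substHom_P (j : ℕ) : substHom (P (2 * j + 1)) = X - C Zsqrtd.sqrtd ∧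
    substHom (P (2 * j + 2)) = -2 * X := by
  have key (m : ℕ) (hm : substHom (P m) = X - C Zsqrtd.sqrtd) :
      substHom (P (m + 1)) = -2 * X := by
    rw [P_succ]
    simp only [map_add, map_sub, map_mul, map_pow, map_ofNat, substHom_X, substHom_CX, hm]
    linear_combination (3 * X - C Zsqrtd.sqrtd) * I_sq
  have h1 : substHom (P (2 * j + 1)) = X - C Zsqrtd.sqrtd := by
    induction j with
    | zero => rw [mul_zero, zero_add, P_one, substHom_X]
    | succ j ih =>
      rw [show 2 * (j + 1) + 1 = 2 * j + 1 + 1 + 1 by ring, P_succ]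
      simp only [map_add, map_sub, map_mul, map_pow, map_ofNat, substHom_X, substHom_CX, key _ ih]
      ring
  exact ⟨h1, key _ h1⟩

lemma subst_S_even (j : ℕ) :
    substHom (S (2 * j + 1)) = 3 * (2 * C Zsqrtd.sqrtd * X + 1) := by
  have h1 := substHom_P j
  have h2 := (substHom_P (j + 1)).1
  rw [show 2 * (j + 1) + 1 = 2 * j + 1 + 2 by ring] at h2
  simp only [S, map_add, map_sub, map_mul, map_one, h1, h2]
  linear_combination -2 * I_sq

lemma subst_S_odd (j : ℕ) : substHom (S (2 * j + 2)) = -9 * X ^ 2 := by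
  have h1 := (substHom_P j).2
  have h2 := substHom_P (j + 1)
  rw [show 2 * (j + 1) + 1 = 2 * j + 2 + 1 by ring, show 2 * (j + 1) + 2 = 2 * j + 2 + 2 by ring]
    at h2
  simp only [S, map_add, map_sub, map_mul, map_one, h1, h2]
  linear_combination I_sq

/-! ### Reduction modulo `3` -/

/-- Reduction modulo `3` of the coefficients. -/
noncomputable def red : Polynomial (Polynomial ℤ) →+* Polynomial (Polynomial (ZMod 3)) :=
  mapRingHom (mapRingHom (Int.castRingHom (ZMod 3)))

lemma red_X : red X = X := by simp [red]

lemma red_CX : red (C X) = C X := by simp [red]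

lemma red_three : (3 : Polynomial (Polynomial (ZMod 3))) = 0 := by
  exact_mod_cast CharP.cast_eq_zero (Polynomial (Polynomial (ZMod 3))) 3

lemma red_surjective : Function.Surjective red :=
  map_surjective _ (map_surjective _ (ZMod.ringHom_surjective _))

lemma three_dvd_of_red_eq_zero (x : Polynomial (Polynomial ℤ)) (hx : red x = 0) : 3 ∣ x := by
  have : (3 : Polynomial (Polynomial ℤ)) = C (C 3) := by simp only [map_ofNat]
  rw [this, C_dvd_iff_dvd_coeff]
  intro i
  rw [C_dvd_iff_dvd_coeff]
  intro j
  have h1 : ((red x).coeff i).coeff j = 0 := by rw [hx]; simp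
  rw [red, coe_mapRingHom, coeff_map, coe_mapRingHom, coeff_map, eq_intCast] at h1
  exact_mod_cast (ZMod.intCast_zmod_eq_zero_iff_dvd _ 3).1 h1

lemma red_P (m : ℕ) : red (P (m + 1)) - red (P m) = (X - C X) ^ 3 ^ m := by
  induction m with
  | zero => rw [zero_add, P_one, P, red_X, red_CX, pow_zero, pow_one]
  | succ m ih =>
    rw [P_succ (m + 1), pow_succ 3 m, pow_mul, ← ih, sub_pow_char]
    have e := congrArg red (P_succ m)
    simp only [map_add, map_sub, map_mul, map_pow, map_ofNat, red_X, red_CX] at e ⊢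
    linear_combination -e + (C X) ^ 2 * (red (P m) - red (P (m + 1))) * red_three

lemma red_S (m : ℕ) : red (S m) = ((X - C X) ^ 2 + 1) ^ (2 * 3 ^ m) := by
  have h1 := red_P m
  have h2 := red_P (m + 1)
  rw [mul_comm, pow_mul, add_pow_char_pow, one_pow, ← pow_mul, mul_comm 2, pow_mul, ← h1]
  rw [pow_succ, pow_mul, ← h1] at h2
  simp only [S, map_add, map_sub, map_mul, map_one]
  linear_combination (red (P (m + 1)) - red (P m)) * h2 + (red (P (m + 1)) *
    (red (P (m + 1)) - red (P m)) - (red (P (m + 1)) - red (P m)) ^ 2) * red_three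

lemma quad_prime :
    Prime ((X - C X) ^ 2 + 1 : Polynomial (Polynomial (ZMod 3))) := by
  have e : ((X - C X) ^ 2 + 1 : Polynomial (Polynomial (ZMod 3)))
      = X ^ 2 + C (-2 * X) * X + C (X ^ 2 + 1) := by
    simp only [map_add, map_mul, map_pow, map_neg, map_one, map_ofNat]; ring
  have hd : ((X - C X) ^ 2 + 1 : Polynomial (Polynomial (ZMod 3))).natDegree = 2 := by
    rw [e]; compute_degree!
  have hM : ((X - C X) ^ 2 + 1 : Polynomial (Polynomial (ZMod 3))).Monic := by
    rw [e]; monicity!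
  refine Irreducible.prime ((hM.irreducible_iff_roots_eq_zero_of_degree_le_three hd.ge
    (by omega)).2 (Multiset.eq_zero_of_forall_notMem fun r hr => ?_))
  have h1 := (mem_roots'.1 hr).2
  -- A root `r(a)` would give a square root `r(0)` of `-1` in `ZMod 3`.
  have h2 := congrArg (eval 0) h1
  simp at h2
  revert h2
  generalize eval 0 r = c
  revert c
  decide

/-- A monic divisor `p ≠ 1` of `S m` is modulo `3` a positive power of `(b - a)² + 1` up to a unit,
so it takes a value divisible by `3` at `b = a - i`. -/
lemma three_dvd_subst (p : Polynomial (Polynomial ℤ)) (hp : p.Monic) (hp1 : p ≠ 1) (m : ℕ)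
    (hd : p ∣ S m) : 3 ∣ substHom p := by
  have h1 : red p ∣ ((X - C X) ^ 2 + 1) ^ (2 * 3 ^ m) := red_S m ▸ map_dvd red hd
  obtain ⟨i, -, hi⟩ := (dvd_prime_pow quad_prime _).1 h1
  have hi0 : i ≠ 0 := by
    rintro rfl
    have hM : (red p).Monic := hp.map _
    rw [pow_zero, associated_one_iff_isUnit] at hi
    have h2 := natDegree_eq_zero_of_isUnit hi
    rw [red, coe_mapRingHom, hp.natDegree_map] at h2
    exact hp1 (hp.natDegree_eq_zero.1 h2)
  obtain ⟨g, hg⟩ := (dvd_pow_self _ hi0).trans hi.symm.dvd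
  obtain ⟨g, rfl⟩ := red_surjective g
  obtain ⟨r, hr⟩ := three_dvd_of_red_eq_zero (p - ((X - C X) ^ 2 + 1) * g) (by
    simp only [map_add, map_sub, map_mul, map_pow, map_one, red_X, red_CX, hg]; ring)
  refine ⟨substHom r, ?_⟩
  have h3 := congrArg substHom hr
  simp only [map_add, map_sub, map_mul, map_pow, map_one, map_ofNat, substHom_X, substHom_CX]
    at h3
  linear_combination h3 + substHom g * I_sq

/-! ### Irreducibility -/

lemma eq_of_dvd (p T : Polynomial (Polynomial ℤ)) (hp : p.Monic) (hp1 : p ≠ 1) (m : ℕ)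
    (hT : T.Monic) (hTS : T ∣ S m) (hpT : p ∣ T) (h9 : ¬ 9 ∣ substHom T) : p = T := by
  obtain ⟨q, rfl⟩ := hpT
  have hq : q.Monic := hp.of_mul_monic_left hT
  by_contra hne
  have hq1 : q ≠ 1 := by rintro rfl; simp at hne
  apply h9
  rw [map_mul, show (9 : Polynomial GaussianInt) = 3 * 3 by norm_num]
  exact mul_dvd_mul (three_dvd_subst p hp hp1 m ((dvd_mul_right _ _).trans hTS))
    (three_dvd_subst q hq hq1 m ((dvd_mul_left _ _).trans hTS))

/-- By Gauss, a monic polynomial irreducible over `ℚ` is prime over `ℤ`. -/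
lemma prime_of_irr (p : Polynomial (Polynomial ℤ)) (hmon : p.Monic)
    (hirr : Irreducible (p.map (Polynomial.mapRingHom (Int.castRingHom ℚ)))) : Prime p := by
  have hinj : Function.Injective (Polynomial.mapRingHom (Int.castRingHom ℚ)) :=
    map_injective _ (Int.cast_injective)
  refine ⟨hmon.ne_zero, fun hu => hirr.not_isUnit ?_, fun x y hxy => ?_⟩
  · exact hu.map (mapRingHom (mapRingHom (Int.castRingHom ℚ)))
  · have h1 := Polynomial.map_dvd (Polynomial.mapRingHom (Int.castRingHom ℚ)) hxy
    rw [Polynomial.map_mul] at h1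
    exact (hirr.prime.dvd_or_dvd h1).imp (map_dvd_map _ hinj hmon).1 (map_dvd_map _ hinj hmon).1

theorem stmt13 (k : ℕ) (hk : 2 ≤ k) (p : Polynomial (Polynomial ℤ))
    (hmon : p.Monic)
    (hirr : Irreducible (p.map (Polynomial.mapRingHom (Int.castRingHom ℚ))))
    (hdvd : p ∣ fkn k 2)
    (hndvd : ¬ p ∣ fkn k 1 * fkn (k - 1) 2) :
    ∃ u : GaussianInt,
      (u = 1 ∨ u = Zsqrtd.sqrtd ∨ u = -1 ∨ u = -Zsqrtd.sqrtd) ∧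
      ((Even k → subst p = C u * (3 * (2 * C Zsqrtd.sqrtd * X + 1))) ∧
       (Odd k → subst p = C u * (3 * X))) := by
  obtain ⟨m, rfl⟩ : ∃ m, k = m + 1 := ⟨k - 1, by omega⟩
  have hp := prime_of_irr p hmon hirr
  have hp1 : p ≠ 1 := hp.ne_one
  rw [Nat.add_sub_cancel] at hndvd
  have hn2 : ¬ p ∣ fkn m 2 := fun hd => hndvd (hd.mul_left _)
  have hnR : ¬ p ∣ R m := fun hd => hndvd (by
    rw [fkn_succ_one]; exact (hd.mul_left _).mul_right _)
  have hpS : p ∣ S m := by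
    rw [fkn_succ_two] at hdvd
    exact ((hp.dvd_or_dvd hdvd).resolve_left hn2 |> hp.dvd_or_dvd).resolve_left hnR
  rcases Nat.even_or_odd' m with ⟨j, rfl | rfl⟩
  · obtain ⟨j, rfl⟩ : ∃ i, j = i + 1 := ⟨j - 1, by omega⟩
    obtain ⟨T, hT⟩ := h_dvd_S (j + 1)
    have hsT : substHom T = -3 * C Zsqrtd.sqrtd * X := by
      have h1 := subst_S_odd j
      rw [show 2 * j + 2 = 2 * (j + 1) by ring, hT, map_mul, substHom_h] at h1
      refine mul_left_cancel₀ (a := (-3 * C Zsqrtd.sqrtd * X : Polynomial GaussianInt)) ?_ ?_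
      · rw [← substHom_h]; intro h0
        have h2 := congrArg (fun q => (coeff q 1).im) (substHom_h.symm.trans h0)
        simp at h2
      · rw [h1]; linear_combination (-9 * X ^ 2) * I_sq
    have hTM : T.Monic := h_monic.of_mul_monic_left (hT ▸ S_monic _ (by omega))
    have hpT : p ∣ T := (hp.dvd_or_dvd (hT ▸ hpS)).resolve_left
      fun hd => hn2 (hd.trans (h_dvd_fkn _))
    have := eq_of_dvd p T hmon hp1 _ hTM (hT ▸ dvd_mul_left _ _) hpT (by
      rintro ⟨g, hg⟩
      have h2 := congrArg (fun q => (coeff q 1).im) (hsT.symm.trans hg)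
      simp at h2
      omega)
    refine ⟨-Zsqrtd.sqrtd, by simp, fun he => ?_, fun _ => ?_⟩
    · exact absurd he (by simp [parity_simps])
    · rw [← substHom_apply, this, hsT, C_neg]; ring
  · have := eq_of_dvd p _ hmon hp1 _ (S_monic _ (by omega)) dvd_rfl hpS (by
      rw [subst_S_even]
      rintro ⟨g, hg⟩
      have h2 := congrArg (fun q => (coeff q 0).re) hg
      simp at h2
      omega)
    refine ⟨1, by simp, fun _ => ?_, fun ho => ?_⟩
    · rw [← substHom_apply, this, subst_S_even, C_1, one_mul]
    · exact absurd ho (by simp [Nat.even_add_one, parity_simps])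
end

section
/- Let k ≥ 2 be an even integer and let p ∈ ℤ[a,b] be monic as a polynomial in b over ℤ[a], irreducible in ℚ[a,b], dividing f_{k,2} but not dividing f_{k,1}·f_{k−1,2} (so p is the polynomial h_{k,2}). Then the one-variable polynomial p(0,b) ∈ ℚ[b], obtained by substituting a = 0, is irreducible in ℚ[b]. (Consequently, the polynomial h^{uni}_{k,2} ∈ ℤ[b], whose roots are exactly the values of b for which 0 is strictly (k,2)-preperiodic under z ↦ z³ + b, is either constant or irreducible over ℚ.) -/
/-!
Write `x = P_{k-1}`, `y = P_k`, `z = P_{k+1}` and `g = y² + yx + x² - 3a²`. Since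
`f(u) - f(v) = (u - v)(u² + uv + v² - 3a²)`, one has `f_{k,1} = f_{k-1,1} · g` and
`f_{k,2} = f_{k-1,2} · (z² + zx + x² - 3a²)`. The last factor equals `g · R` with
`R = 1 + (y - x)(x + y + z)`, because `z - y = (y - x) g`. As `p` is prime over `ℚ` and
divides neither `f_{k-1,2}` nor `g`, it divides `R` (`dvd_cofactor`).

At `a = 0` the polynomial `R₀ ∈ ℤ[b]` satisfies

* `R₀ ≡ (b² + 1)^(2·3^(k-1))` modulo `3` (`cofactor_map_zmod`), where `b² + 1` is irreducible;
* `R₀(i) = 3` in `ℤ[i]` for even `k`, because `0 ↦ i ↦ 0` under `z ↦ z³ + i`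
  (`aeval_cofactor`).

This is an Eisenstein situation at `b² + 1`: a nonconstant monic divisor of `R₀` is a positive
power of `b² + 1` modulo `3`, hence has value divisible by `3` at `i`. A product of two such
divisors would have value divisible by `9`, but `9 ∤ 3` in `ℤ[i]`. So `p(0, b)` is irreducible
over `ℤ`, and over `ℚ` by Gauss's lemma.
-/

open Polynomial

/-- The orbit `f_b^m(0)` of the critical point of `z ↦ z³ + b`, as a polynomial in `b`. -/
noncomputable def uniOrbit (m : ℕ) : ℤ[X] := (P m).map (evalRingHom (0 : ℤ))

/-- The cofactor of `P_k² + P_k P_{k-1} + P_{k-1}² - 3a²` in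
`P_{k+1}² + P_{k+1} P_{k-1} + P_{k-1}² - 3a²`, with the index shifted so that `m = k - 1`. -/
noncomputable def cofactor (m : ℕ) : Polynomial (Polynomial ℤ) :=
  1 + (P (m + 1) - P m) * (P m + P (m + 1) + P (m + 2))

/-- The unicritical specialization of `cofactor` at `a = 0`. -/
noncomputable def uniCofactor (m : ℕ) : ℤ[X] :=
  1 + (uniOrbit (m + 1) - uniOrbit m) * (uniOrbit m + uniOrbit (m + 1) + uniOrbit (m + 2))

lemma fkn_one_factor (m : ℕ) :
    fkn (m + 1) 1 =
      fkn m 1 * ((P (m + 1)) ^ 2 + P (m + 1) * P m + (P m) ^ 2 - 3 * (C X) ^ 2) := by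
  simp only [fkn]
  linear_combination P_succ (m + 1) - P_succ m

lemma fkn_two_factor (m : ℕ) :
    fkn (m + 1) 2 = fkn m 2 *
      (((P (m + 1)) ^ 2 + P (m + 1) * P m + (P m) ^ 2 - 3 * (C X) ^ 2) * cofactor m) := by
  simp only [fkn, cofactor, show m + 1 + 2 = (m + 2) + 1 by ring]
  have h1 := P_succ (m + 2)
  have h2 := P_succ (m + 1)
  have h3 := P_succ m
  have h4 : P (m + 2) - P (m + 1) = (P (m + 1) - P m) *
      ((P (m + 1)) ^ 2 + P (m + 1) * P m + (P m) ^ 2 - 3 * (C X) ^ 2) := by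
    linear_combination h2 - h3
  linear_combination h1 - h3 +
    (P (m + 2) - P m) * (P m + P (m + 1) + P (m + 2)) * h4

lemma uniOrbit_zero : uniOrbit 0 = 0 := by simp [uniOrbit, P]

lemma uniOrbit_succ (m : ℕ) : uniOrbit (m + 1) = uniOrbit m ^ 3 + X := by
  simp [uniOrbit, P]

lemma map_cofactor (m : ℕ) : (cofactor m).map (evalRingHom (0 : ℤ)) = uniCofactor m := by
  simp [cofactor, uniCofactor, uniOrbit]

/-- A prime factor of `f_{k,2}` outside `f_{k,1} · f_{k-1,2}` divides the cofactor. -/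
lemma dvd_cofactor (m : ℕ) (p : Polynomial (Polynomial ℤ)) (hmon : p.Monic)
    (hirr : Irreducible (p.map (mapRingHom (Int.castRingHom ℚ))))
    (hdvd : p ∣ fkn (m + 1) 2) (hndvd : ¬ p ∣ fkn (m + 1) 1 * fkn m 2) :
    p ∣ cofactor m := by
  have hinj : Function.Injective (mapRingHom (Int.castRingHom ℚ)) :=
    map_injective _ Int.cast_injective
  -- Divisibility by the monic `p` can be tested over `ℚ`, so `p` is prime over `ℤ` as well.
  have hsplit : ∀ u v, p ∣ u * v → p ∣ u ∨ p ∣ v := by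
    intro u v h
    have h' := map_dvd (mapRingHom (mapRingHom (Int.castRingHom ℚ))) h
    rw [map_mul] at h'
    simp only [coe_mapRingHom] at h'
    rcases hirr.prime.dvd_or_dvd h' with h' | h'
    · exact Or.inl ((map_dvd_map _ hinj hmon).1 h')
    · exact Or.inr ((map_dvd_map _ hinj hmon).1 h')
  rw [fkn_two_factor] at hdvd
  rw [fkn_one_factor] at hndvd
  rcases hsplit _ _ hdvd with h | h
  · exact absurd (h.mul_left _) hndvd
  · rcases hsplit _ _ h with h | h
    · exact absurd ((h.mul_left _).mul_right _) hndvd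
    · exact h

instance : Fact (Nat.Prime 3) := ⟨Nat.prime_three⟩

/-- In characteristic `3` cubing is additive, so the increments of the orbit are pure powers. -/
lemma uniOrbit_sub_map_zmod (m : ℕ) :
    (uniOrbit (m + 1)).map (Int.castRingHom (ZMod 3)) -
      (uniOrbit m).map (Int.castRingHom (ZMod 3)) = X ^ 3 ^ m := by
  induction m with
  | zero => simp [uniOrbit_succ, uniOrbit_zero]
  | succ m ih =>
    rw [pow_succ, pow_mul, ← ih, sub_pow_char (R := (ZMod 3)[X]) (p := 3),
      uniOrbit_succ (m + 1)]
    nth_rw 2 [uniOrbit_succ m]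
    simp

lemma cofactor_map_zmod (m : ℕ) :
    (uniCofactor m).map (Int.castRingHom (ZMod 3)) = (X ^ 2 + 1) ^ (2 * 3 ^ m) := by
  have h0 := uniOrbit_sub_map_zmod m
  have h1 := uniOrbit_sub_map_zmod (m + 1)
  have h3 : (3 : (ZMod 3)[X]) = 0 := CharP.cast_eq_zero (ZMod 3)[X] 3
  have h2 : ((X : (ZMod 3)[X]) ^ 2 + 1) ^ (2 * 3 ^ m) = ((X ^ 3 ^ m) ^ 2 + 1) ^ 2 := by
    rw [mul_comm, pow_mul, add_pow_char_pow, one_pow, ← pow_mul, ← pow_mul, mul_comm]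
  have h4 : (X : (ZMod 3)[X]) ^ 3 ^ (m + 1) = (X ^ 3 ^ m) ^ 3 := by rw [pow_succ, pow_mul]
  rw [h2]
  rw [h4] at h1
  simp only [uniCofactor, Polynomial.map_add, Polynomial.map_mul, Polynomial.map_sub,
    Polynomial.map_one]
  generalize (uniOrbit m).map (Int.castRingHom (ZMod 3)) = x at *
  generalize (uniOrbit (m + 1)).map (Int.castRingHom (ZMod 3)) = y at *
  generalize (uniOrbit (m + 2)).map (Int.castRingHom (ZMod 3)) = z at *
  generalize (X : (ZMod 3)[X]) ^ 3 ^ m = t at *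
  have hy : y = x + t := by linear_combination h0
  have hz : z = x + t + t ^ 3 := by linear_combination h1 + hy
  rw [hy, hz]
  linear_combination (x * t) * h3

/-- The point `i` of `ℤ[i]`. -/
def gaussI : GaussianInt := ⟨0, 1⟩

lemma gaussI_sq : gaussI ^ 2 = -1 := by decide

/-- `0 ↦ i ↦ 0` is a cycle of `z ↦ z³ + i`. -/
lemma aeval_uniOrbit (j : ℕ) :
    aeval gaussI (uniOrbit (2 * j)) = 0 ∧ aeval gaussI (uniOrbit (2 * j + 1)) = gaussI := by
  induction j with
  | zero => simp [uniOrbit_succ, uniOrbit_zero]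
  | succ j ih =>
    have h : aeval gaussI (uniOrbit (2 * (j + 1))) = 0 := by
      rw [show 2 * (j + 1) = (2 * j + 1) + 1 by ring, uniOrbit_succ]
      simp only [map_add, map_pow, ih.2, aeval_X]
      linear_combination gaussI * gaussI_sq
    refine ⟨h, ?_⟩
    rw [uniOrbit_succ]
    simp [h]

lemma aeval_cofactor (j : ℕ) : aeval gaussI (uniCofactor (2 * j + 1)) = 3 := by
  have h1 := (aeval_uniOrbit j).2
  have h2 := (aeval_uniOrbit (j + 1)).1
  have h3 := (aeval_uniOrbit (j + 1)).2
  rw [show 2 * (j + 1) = 2 * j + 2 by ring] at h2 h3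
  simp only [uniCofactor, map_add, map_mul, map_sub, map_one,
    show 2 * j + 1 + 1 = 2 * j + 2 by ring, show 2 * j + 1 + 2 = 2 * j + 2 + 1 by ring, h1, h2, h3]
  linear_combination -2 * gaussI_sq

lemma irreducible_X_sq_add_one : Irreducible (X ^ 2 + 1 : (ZMod 3)[X]) := by
  have hdeg : (X ^ 2 + 1 : (ZMod 3)[X]).natDegree = 2 := by compute_degree!
  rw [irreducible_iff_roots_eq_zero_of_degree_le_three (by omega) (by omega)]
  refine Multiset.eq_zero_of_forall_notMem fun x hx => ?_
  have h := isRoot_of_mem_roots hx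
  simp only [IsRoot, eval_add, eval_pow, eval_X, eval_one] at h
  clear hx
  revert x
  decide

/-- The Eisenstein step: a nontrivial monic `u` dividing a power of `b² + 1` modulo `3` is
divisible by `b² + 1` modulo `3`, so its value at `i` is divisible by `3`. -/
lemma three_dvd_aeval (u : ℤ[X]) (hu : u.Monic) (hu1 : u ≠ 1) (N : ℕ)
    (h : u.map (Int.castRingHom (ZMod 3)) ∣ (X ^ 2 + 1) ^ N) :
    (3 : GaussianInt) ∣ aeval gaussI u := by
  obtain ⟨n, -, hn⟩ := (dvd_prime_pow irreducible_X_sq_add_one.prime N).1 h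
  have hmon : ((X : (ZMod 3)[X]) ^ 2 + 1).Monic := by monicity!
  have hn := eq_of_monic_of_associated (hu.map _) (hmon.pow n) hn
  have hn0 : n ≠ 0 := by
    rintro rfl
    apply hu1
    rw [pow_zero] at hn
    have h' := congrArg natDegree hn
    rw [hu.natDegree_map, natDegree_one] at h'
    exact hu.natDegree_eq_zero.1 h'
  have hzero : (u - (X ^ 2 + 1) ^ n).map (Int.castRingHom (ZMod 3)) = 0 := by
    simp [hn]
  have hC : C (3 : ℤ) ∣ u - (X ^ 2 + 1) ^ n := by
    rw [C_dvd_iff_dvd_coeff]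
    intro i
    have hi := congrArg (fun q => coeff q i) hzero
    simp only [coeff_map, coeff_zero] at hi
    exact (ZMod.intCast_zmod_eq_zero_iff_dvd _ 3).1 hi
  obtain ⟨v, hv⟩ := hC
  refine ⟨aeval gaussI v, ?_⟩
  have := congrArg (aeval gaussI) hv
  rw [map_mul, aeval_C] at this
  simpa [gaussI_sq, hn0] using this

theorem stmt18 (k : ℕ) (hk : 2 ≤ k) (hke : Even k) (p : Polynomial (Polynomial ℤ))
    (hmon : p.Monic)
    (hirr : Irreducible (p.map (Polynomial.mapRingHom (Int.castRingHom ℚ))))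
    (hdvd : p ∣ fkn k 2)
    (hndvd : ¬ p ∣ fkn k 1 * fkn (k - 1) 2) :
    Irreducible ((p.map (Polynomial.evalRingHom (0 : ℤ))).map
      (Int.castRingHom ℚ)) := by
  obtain ⟨j, rfl⟩ : ∃ j, k = 2 * j + 1 + 1 := by
    obtain ⟨i, hi⟩ := hke
    exact ⟨i - 1, by omega⟩
  have hp := dvd_cofactor (2 * j + 1) p hmon hirr hdvd hndvd
  have hp0 : p.map (evalRingHom (0 : ℤ)) ∣ uniCofactor (2 * j + 1) := by
    rw [← map_cofactor]
    exact Polynomial.map_dvd _ hp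
  have hmon0 : (p.map (evalRingHom (0 : ℤ))).Monic := hmon.map _
  have hne : p.map (evalRingHom (0 : ℤ)) ≠ 1 := by
    intro h
    have h' := congrArg natDegree h
    rw [hmon.natDegree_map, natDegree_one] at h'
    rw [hmon.natDegree_eq_zero.1 h', Polynomial.map_one] at hirr
    exact not_irreducible_one hirr
  refine (hmon0.irreducible_iff_irreducible_map_fraction_map (K := ℚ)).1 ?_
  rw [irreducible_of_monic hmon0 hne]
  intro u v hu hv huv
  by_contra! hcon
  have hdiv : ∀ w, w ∣ uniCofactor (2 * j + 1) →
      w.map (Int.castRingHom (ZMod 3)) ∣ (X ^ 2 + 1) ^ (2 * 3 ^ (2 * j + 1)) := fun w hw => by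
    rw [← cofactor_map_zmod]
    exact Polynomial.map_dvd _ hw
  rw [← huv] at hp0
  have h3u := three_dvd_aeval u hu hcon.1 _ (hdiv u ((dvd_mul_right u v).trans hp0))
  have h3v := three_dvd_aeval v hv hcon.2 _ (hdiv v ((dvd_mul_left v u).trans hp0))
  have h9 : (3 * 3 : GaussianInt) ∣ 3 := by
    have h := map_dvd (aeval gaussI) hp0
    rw [map_mul, aeval_cofactor] at h
    exact (mul_dvd_mul h3u h3v).trans h
  obtain ⟨w, hw⟩ := h9
  have hre := congrArg Zsqrtd.re hw
  have h3 : (3 : GaussianInt) = ⟨3, 0⟩ := by decide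
  rw [h3] at hre
  simp at hre
  omega
end
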